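/- Let X_n(x) = max{S_k(x) : S_k(x) ≤ n, k ≥ 0} where S_k = a_1 + ⋯ + a_k are the continued fraction digit sums. Then for every ε ∈ (0,1), λ({x ∈ [0,1] : (n - X_n(x))/n > ε}) ∼ (-log ε)/log n as n → ∞, where λ is Lebesgue measure. -/

import Mathlib

open MeasureTheory Filter

/-- The Gauss map `G(x) = 1/x - ⌊1/x⌋` (with `G 0 = 0`). -/
noncomputable def gaussMap (x : ℝ) : ℝ := if x = 0 then 0 else Int.fract (1 / x)

/-- The digit sum `S_k = a_1 + ⋯ + a_k` of continued fraction digits, `a_{i+1}(x) =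
⌊1 / Gⁱ(x)⌋`. -/
noncomputable def cfDigitSum (x : ℝ) (k : ℕ) : ℕ :=
  ∑ i ∈ Finset.range k, (⌊1 / (gaussMap^[i] x)⌋).toNat

/-- `X_n(x) = max{S_k(x) : S_k(x) ≤ n, k ∈ ℕ₀}`. -/
noncomputable def Xproc (n : ℕ) (x : ℝ) : ℕ :=
  sSup {m : ℕ | m ≤ n ∧ ∃ k : ℕ, cfDigitSum x k = m}

/-!
Almost every `x` satisfies `X_n(x) = j` exactly when `j` is a digit sum `S_k(x)` and the tail
`Gᵏ(x)` lies below `1 / (n - j + 1)`. This event is a union of images of `(0, 1 / (n - j + 1))`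
under the inverse branches `y ↦ (p + p' * y) / (q + q' * y)` of the iterated Gauss map, one for each
digit word of sum `j`. Since `q' ≤ q`, comparing the derivatives `(q + q' * y)⁻²` with `q⁻²` gives
`v j / (n - j + 2) ≤ λ(X_n = j) ≤ v j / (n - j + 1)` where `v j = ∑ q⁻²`.

As these probabilities add up to one, `v` satisfies a renewal inequality in each direction. Summing
them over `n` bounds `∑_{j < n} v j` on both sides by `n` over a harmonic sum, and since harmonic
sums vary slowly, `∑_{j < n} v j ∼ n / log n`. Abel summation now shows
`log n * ∑_{j < (1 - ε) * n} v j / (n - j) → ∫₀^{1-ε} dt / (1 - t) = -log ε`.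
-/

section Renewal

variable {v g : ℕ → ℝ}

lemma le_sum_mul_sum_of_one_le_convolution (hv : ∀ j, 0 ≤ v j) (hg : ∀ k, 0 ≤ g k)
    (h : ∀ m, 1 ≤ ∑ j ∈ Finset.range (m + 1), v j * g (m - j)) (n : ℕ) :
    (n : ℝ) ≤ (∑ j ∈ Finset.range n, v j) * ∑ k ∈ Finset.range n, g k :=
  calc (n : ℝ)
    _ = ∑ m ∈ Finset.range n, 1 := by simp
    _ ≤ ∑ m ∈ Finset.range n, ∑ j ∈ Finset.range (m + 1), v j * g (m - j) :=
        Finset.sum_le_sum fun m _ => h m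
    _ = ∑ j ∈ Finset.range n, v j * ∑ k ∈ Finset.range (n - j), g k := by
        simp only [Finset.mul_sum, ← Finset.sum_range_diag_flip n fun j k => v j * g k]
    _ ≤ ∑ j ∈ Finset.range n, v j * ∑ k ∈ Finset.range n, g k := by
        gcongr with j
        · exact hv j
        · exact fun k _ _ => hg k
        · exact Nat.sub_le n j
    _ = (∑ j ∈ Finset.range n, v j) * ∑ k ∈ Finset.range n, g k := (Finset.sum_mul ..).symm

lemma sum_mul_sum_le_of_convolution_le_one (hv : ∀ j, 0 ≤ v j) (hg : ∀ k, 0 ≤ g k)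
    (h : ∀ m, ∑ j ∈ Finset.range (m + 1), v j * g (m - j) ≤ 1) (n k : ℕ) :
    (∑ j ∈ Finset.range n, v j) * ∑ i ∈ Finset.range k, g i ≤ n + k :=
  calc (∑ j ∈ Finset.range n, v j) * ∑ i ∈ Finset.range k, g i
    _ = ∑ j ∈ Finset.range n, v j * ∑ i ∈ Finset.range k, g i := Finset.sum_mul ..
    _ ≤ ∑ j ∈ Finset.range n, v j * ∑ i ∈ Finset.range (n + k - j), g i := by
        gcongr with j hj
        · exact hv j
        · exact fun i _ _ => hg i
        · have := Finset.mem_range.1 hj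
          omega
    _ ≤ ∑ j ∈ Finset.range (n + k), v j * ∑ i ∈ Finset.range (n + k - j), g i :=
        Finset.sum_le_sum_of_subset_of_nonneg (Finset.range_mono (Nat.le_add_right n k))
          fun j _ _ => mul_nonneg (hv j) (Finset.sum_nonneg fun i _ => hg i)
    _ = ∑ m ∈ Finset.range (n + k), ∑ j ∈ Finset.range (m + 1), v j * g (m - j) := by
        simp only [Finset.mul_sum, ← Finset.sum_range_diag_flip (n + k) fun j i => v j * g i]
    _ ≤ ∑ m ∈ Finset.range (n + k), 1 := Finset.sum_le_sum fun m _ => h m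
    _ = n + k := by simp

lemma sum_range_one_div_add_one_eq_harmonic (n : ℕ) :
    ∑ k ∈ Finset.range n, 1 / ((k : ℝ) + 1) = harmonic n := by
  simp [harmonic]

lemma sum_range_one_div_add_one_le (n : ℕ) :
    ∑ k ∈ Finset.range n, 1 / ((k : ℝ) + 1) ≤ 1 + Real.log n :=
  (sum_range_one_div_add_one_eq_harmonic n).trans_le (harmonic_le_one_add_log n)

lemma log_sub_one_le_sum_range_one_div_add_two {n : ℕ} (hn : n ≠ 0) :
    Real.log n - 1 ≤ ∑ k ∈ Finset.range n, 1 / ((k : ℝ) + 2) := by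
  have hsum : ∑ k ∈ Finset.range (n + 1), 1 / ((k : ℝ) + 1) =
      ∑ k ∈ Finset.range n, 1 / ((k : ℝ) + 2) + 1 := by
    rw [Finset.sum_range_succ']
    simp [add_assoc, one_add_one_eq_two]
  have hlog : Real.log n ≤ Real.log ((n + 1 + 1 : ℕ) : ℝ) :=
    Real.log_le_log (by positivity) (by push_cast; linarith)
  have := log_add_one_le_harmonic (n + 1)
  rw [← sum_range_one_div_add_one_eq_harmonic, hsum] at this
  linarith

lemma tendsto_log_natCast_atTop : Tendsto (fun n : ℕ => Real.log n) atTop atTop :=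
  Real.tendsto_log_atTop.comp tendsto_natCast_atTop_atTop

lemma log_div_mul_sum_le_of_renewal (hv : ∀ j, 0 ≤ v j)
    (h : ∀ n, ∑ j ∈ Finset.range (n + 1), v j * (1 / (((n - j : ℕ) : ℝ) + 2)) ≤ 1) {n : ℕ}
    (hn : 0 < Real.log n - Real.log (Real.log n) - 1) (hn' : 0 < Real.log n) :
    Real.log n / n * ∑ j ∈ Finset.range n, v j ≤
      (1 + (Real.log n)⁻¹ + (n : ℝ)⁻¹) /
        (1 - Real.log (Real.log n) / Real.log n - (Real.log n)⁻¹) := by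
  set l := Real.log n
  have hn0 : (0 : ℝ) < n := by
    refine Nat.cast_pos.2 (Nat.pos_of_ne_zero ?_)
    rintro rfl
    simp [l] at hn'
  -- A window this long has harmonic sum `∼ log n`, yet its length is negligible against `n`.
  set k := ⌈n / l⌉₊
  have hk0 : k ≠ 0 := (Nat.ceil_pos.2 (by positivity)).ne'
  have hk : (k : ℝ) ≤ n / l + 1 := (Nat.ceil_lt_add_one (by positivity)).le
  have hlogk : l - Real.log l - 1 ≤ ∑ i ∈ Finset.range k, 1 / ((i : ℝ) + 2) := by
    have : l - Real.log l ≤ Real.log k := by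
      rw [← Real.log_div hn0.ne' hn'.ne']
      exact Real.log_le_log (by positivity) (Nat.le_ceil _)
    linarith [log_sub_one_le_sum_range_one_div_add_two hk0]
  have hsum : (∑ j ∈ Finset.range n, v j) * (l - Real.log l - 1) ≤ n + (n / l + 1) :=
    calc _ ≤ (∑ j ∈ Finset.range n, v j) * ∑ i ∈ Finset.range k, 1 / ((i : ℝ) + 2) :=
          mul_le_mul_of_nonneg_left hlogk (Finset.sum_nonneg fun j _ => hv j)
      _ ≤ n + k := sum_mul_sum_le_of_convolution_le_one hv (fun i => by positivity) h n k
      _ ≤ n + (n / l + 1) := by gcongr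
  calc l / n * ∑ j ∈ Finset.range n, v j
      ≤ l / n * ((n + (n / l + 1)) / (l - Real.log l - 1)) := by
        gcongr
        exact (le_div_iff₀ hn).2 hsum
    _ = _ := by
        have : l - Real.log l - 1 ≠ 0 := hn.ne'
        have h1 : 1 - Real.log l / l - l⁻¹ = (l - Real.log l - 1) / l := by field_simp
        rw [h1]
        field_simp
        ring

theorem tendsto_log_div_mul_sum_of_renewal (hv : ∀ j, 0 ≤ v j)
    (hle : ∀ n, ∑ j ∈ Finset.range (n + 1), v j * (1 / (((n - j : ℕ) : ℝ) + 2)) ≤ 1)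
    (hge : ∀ n, 1 ≤ ∑ j ∈ Finset.range (n + 1), v j * (1 / (((n - j : ℕ) : ℝ) + 1))) :
    Tendsto (fun n : ℕ => Real.log n / n * ∑ j ∈ Finset.range n, v j) atTop (nhds 1) := by
  have hlog := tendsto_log_natCast_atTop
  have hinv : Tendsto (fun n : ℕ => (Real.log n)⁻¹) atTop (nhds 0) := hlog.inv_tendsto_atTop
  have hloglog : Tendsto (fun n : ℕ => Real.log (Real.log n) / Real.log n) atTop (nhds 0) :=
    Real.isLittleO_log_id_atTop.tendsto_div_nhds_zero.comp hlog
  have hden : Tendsto (fun n : ℕ => 1 - Real.log (Real.log n) / Real.log n - (Real.log n)⁻¹)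
      atTop (nhds 1) := by
    simpa using (hloglog.const_sub 1).sub hinv
  have hlower : Tendsto (fun n : ℕ => (1 + (Real.log n)⁻¹)⁻¹) atTop (nhds 1) := by
    simpa using (hinv.const_add 1).inv₀ (by simp)
  have hupper : Tendsto (fun n : ℕ => (1 + (Real.log n)⁻¹ + (n : ℝ)⁻¹) /
      (1 - Real.log (Real.log n) / Real.log n - (Real.log n)⁻¹)) atTop (nhds 1) := by
    simpa [Pi.div_def] using
      ((hinv.const_add 1).add tendsto_inv_atTop_nhds_zero_nat).div hden one_ne_zero
  refine tendsto_of_tendsto_of_tendsto_of_le_of_le' hlower hupper ?_ ?_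
  · filter_upwards [eventually_gt_atTop 0, hlog.eventually_gt_atTop 0] with n hn hl
    have hn : (0 : ℝ) < n := Nat.cast_pos.2 hn
    have hS : (n : ℝ) ≤ (∑ j ∈ Finset.range n, v j) * (1 + Real.log n) :=
      (le_sum_mul_sum_of_one_le_convolution hv (fun k => by positivity) hge n).trans
        (mul_le_mul_of_nonneg_left (sum_range_one_div_add_one_le n)
          (Finset.sum_nonneg fun j _ => hv j))
    rw [div_mul_eq_mul_div, le_div_iff₀ hn, inv_mul_le_iff₀ (by positivity)]
    refine hS.trans_eq ?_
    field_simp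
    ring
  · filter_upwards [hlog.eventually_gt_atTop 0, hden.eventually_const_lt one_pos] with n hl hd
    refine log_div_mul_sum_le_of_renewal hv hle ?_ hl
    calc (0 : ℝ) < Real.log n * (1 - Real.log (Real.log n) / Real.log n - (Real.log n)⁻¹) :=
          mul_pos hl hd
      _ = _ := by field_simp

end Renewal

lemma tendsto_log_div_log_of_tendsto_div {m : ℕ → ℕ} {t : ℝ} (ht : 0 < t)
    (hm : Tendsto (fun n : ℕ => (m n : ℝ) / n) atTop (nhds t)) :
    Tendsto (fun n : ℕ => Real.log n / Real.log (m n)) atTop (nhds 1) := by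
  have hlog := tendsto_log_natCast_atTop
  have hratio : Tendsto (fun n : ℕ => Real.log ((m n : ℝ) / n) / Real.log n) atTop (nhds 0) :=
    (hm.log ht.ne').div_atTop hlog
  have hinv : Tendsto (fun n : ℕ => (1 + Real.log ((m n : ℝ) / n) / Real.log n)⁻¹)
      atTop (nhds 1) := by
    simpa using (hratio.const_add 1).inv₀ (by simp)
  refine hinv.congr' ?_
  filter_upwards [hlog.eventually_gt_atTop 0, hm.eventually_const_lt ht,
    eventually_gt_atTop 0] with n hl hmn hn
  have hn : (0 : ℝ) < n := Nat.cast_pos.2 hn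
  have hm0 : (m n : ℝ) ≠ 0 := fun h => by simp [h] at hmn
  rw [Real.log_div hm0 hn.ne', sub_div, div_self hl.ne', add_sub_cancel, inv_div]

lemma tendsto_log_div_mul_sum_floor {v : ℕ → ℝ} {c : ℝ}
    (hv : Tendsto (fun n : ℕ => Real.log n / n * ∑ j ∈ Finset.range n, v j) atTop (nhds c))
    {t : ℝ} (ht : 0 < t) :
    Tendsto (fun n : ℕ => Real.log n / n * ∑ j ∈ Finset.Icc 0 ⌊t * n⌋₊, v j) atTop
      (nhds (c * t)) := by
  set m : ℕ → ℕ := fun n => ⌊t * n⌋₊ + 1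
  have hdiv : Tendsto (fun n : ℕ => (m n : ℝ) / n) atTop (nhds t) := by
    simpa [m, add_div] using ((tendsto_nat_floor_mul_div_atTop ht.le).comp
      tendsto_natCast_atTop_atTop).add tendsto_inv_atTop_nhds_zero_nat
  have hm : Tendsto m atTop atTop := by
    refine tendsto_atTop_mono (fun n => Nat.le_succ _) (tendsto_nat_floor_atTop.comp ?_)
    exact tendsto_natCast_atTop_atTop.const_mul_atTop ht
  have hlim := ((hv.comp hm).mul hdiv).mul (tendsto_log_div_log_of_tendsto_div ht hdiv)
  rw [mul_one] at hlim
  refine hlim.congr' ?_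
  filter_upwards [(tendsto_log_natCast_atTop.comp hm).eventually_gt_atTop 0] with n hl
  have hm0 : (m n : ℝ) ≠ 0 := by positivity
  rw [Function.comp_apply] at hl
  rw [← Nat.range_succ_eq_Icc_zero, Function.comp_apply]
  change _ = Real.log n / n * ∑ j ∈ Finset.range (m n), v j
  field_simp

lemma sum_floor_mul_eq_sub_integral_mul {f f' : ℝ → ℝ} {T : ℝ} (hT : 0 ≤ T)
    (hf : ∀ t ∈ Set.Icc 0 T, HasDerivAt f (f' t) t) (hf' : ContinuousOn f' (Set.Icc 0 T))
    (v : ℕ → ℝ) {n : ℕ} (hn : 0 < n) :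
    ∑ j ∈ Finset.Icc 0 ⌊T * n⌋₊, v j * f (j / n) =
      f T * ∑ j ∈ Finset.Icc 0 ⌊T * n⌋₊, v j -
        ∫ t in (0 : ℝ)..T, f' t * ∑ j ∈ Finset.Icc 0 ⌊t * n⌋₊, v j := by
  have hn : (0 : ℝ) < n := Nat.cast_pos.2 hn
  have hmem : ∀ x ∈ Set.Icc 0 (T * n), x / n ∈ Set.Icc 0 T := fun x hx =>
    ⟨div_nonneg hx.1 hn.le, (div_le_iff₀ hn).2 hx.2⟩
  have hderiv : ∀ x ∈ Set.Icc 0 (T * n), HasDerivAt (fun x => f (x / n)) (f' (x / n) / n) x := by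
    intro x hx
    simpa [Function.comp_def, div_eq_mul_inv] using
      (hf _ (hmem x hx)).comp x ((hasDerivAt_id x).div_const (n : ℝ))
  have hcont : ContinuousOn (fun x => f' (x / n) / n) (Set.Icc 0 (T * n)) :=
    (hf'.comp (by fun_prop) hmem).div_const _
  have hintegrable : IntegrableOn (deriv fun x => f (x / n)) (Set.Icc 0 (T * n)) :=
    hcont.integrableOn_Icc.congr_fun (fun x hx => (hderiv x hx).deriv.symm) measurableSet_Icc
  have habel := sum_mul_eq_sub_integral_mul v (by positivity)
    (fun x hx => (hderiv x hx).differentiableAt) hintegrable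
  have hsubst : ∫ x in Set.Ioc 0 (T * n), deriv (fun x => f (x / n)) x *
      ∑ j ∈ Finset.Icc 0 ⌊x⌋₊, v j = ∫ t in (0 : ℝ)..T, f' t * ∑ j ∈ Finset.Icc 0 ⌊t * n⌋₊, v j :=
    calc _ = ∫ x in Set.Ioc 0 (T * n), (f' (x / n) * ∑ j ∈ Finset.Icc 0 ⌊x / n * n⌋₊, v j) / n := by
          refine setIntegral_congr_fun measurableSet_Ioc fun x hx => ?_
          simp only [(hderiv x (Set.Ioc_subset_Icc_self hx)).deriv, div_mul_cancel₀ x hn.ne']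
          ring
      _ = _ := by
          rw [← intervalIntegral.integral_of_le (by positivity), intervalIntegral.integral_div,
            intervalIntegral.integral_comp_div (fun t => f' t * ∑ j ∈ Finset.Icc 0 ⌊t * n⌋₊, v j)
              hn.ne', zero_div, mul_div_cancel_right₀ T hn.ne', smul_eq_mul,
            mul_div_cancel_left₀ _ hn.ne']
  rw [hsubst, mul_div_cancel_right₀ T hn.ne'] at habel
  simpa only [mul_comm] using habel

lemma tendsto_integral_mul_of_monotone {A : ℕ → ℝ → ℝ} {a φ : ℝ → ℝ} {T : ℝ} (hT : 0 < T)
    (hmono : ∀ n, Monotone (A n)) (hnonneg : ∀ n t, 0 ≤ A n t)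
    (hA : ∀ t ∈ Set.Ioc 0 T, Tendsto (fun n => A n t) atTop (nhds (a t)))
    (hφ : IntervalIntegrable φ volume 0 T) :
    Tendsto (fun n => ∫ t in (0 : ℝ)..T, φ t * A n t) atTop
      (nhds (∫ t in (0 : ℝ)..T, φ t * a t)) := by
  have hbound : ∀ᶠ n in atTop, A n T ≤ a T + 1 :=
    (hA T ⟨hT, le_rfl⟩).eventually_le_const (lt_add_one _)
  refine intervalIntegral.tendsto_integral_filter_of_dominated_convergence
    (fun t => ‖φ t‖ * (a T + 1)) ?_ ?_ (hφ.norm.mul_const _) ?_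
  · exact Eventually.of_forall fun n =>
      hφ.def'.aestronglyMeasurable.mul (hmono n).measurable.aestronglyMeasurable
  · filter_upwards [hbound] with n hn
    refine Eventually.of_forall fun t ht => ?_
    rw [Set.uIoc_of_le hT.le] at ht
    rw [norm_mul, Real.norm_of_nonneg (hnonneg n t)]
    exact mul_le_mul_of_nonneg_left ((hmono n ht.2).trans hn) (norm_nonneg _)
  · refine Eventually.of_forall fun t ht => ?_
    rw [Set.uIoc_of_le hT.le] at ht
    exact (hA t ht).const_mul _

theorem tendsto_mul_sum_floor_mul {v w : ℕ → ℝ} (hv : ∀ j, 0 ≤ v j) (hw : ∀ n, 0 ≤ w n) {T : ℝ}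
    (hT : 0 < T) {a : ℝ → ℝ}
    (ha : ∀ t ∈ Set.Ioc 0 T,
      Tendsto (fun n : ℕ => w n * ∑ j ∈ Finset.Icc 0 ⌊t * n⌋₊, v j) atTop (nhds (a t)))
    {f f' : ℝ → ℝ} (hf : ∀ t ∈ Set.Icc 0 T, HasDerivAt f (f' t) t)
    (hf' : ContinuousOn f' (Set.Icc 0 T)) :
    Tendsto (fun n : ℕ => w n * ∑ j ∈ Finset.Icc 0 ⌊T * n⌋₊, v j * f (j / n)) atTop
      (nhds (f T * a T - ∫ t in (0 : ℝ)..T, f' t * a t)) := by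
  have hmono : ∀ n : ℕ, Monotone fun t : ℝ => w n * ∑ j ∈ Finset.Icc 0 ⌊t * n⌋₊, v j := by
    intro n s t hst
    dsimp only
    gcongr
    · exact hw n
    · exact fun j _ _ => hv j
  have hlim := tendsto_integral_mul_of_monotone hT hmono
    (fun n t => mul_nonneg (hw n) (Finset.sum_nonneg fun j _ => hv j)) ha
    (hf'.mono (Set.uIcc_of_le hT.le).subset).intervalIntegrable
  refine (((ha T ⟨hT, le_rfl⟩).const_mul (f T)).sub hlim).congr' ?_
  filter_upwards [eventually_gt_atTop 0] with n hn
  rw [sum_floor_mul_eq_sub_integral_mul hT.le hf hf' v hn, mul_sub,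
    ← intervalIntegral.integral_const_mul]
  simp only [mul_left_comm]

theorem tendsto_mul_sum_floor_mul_of_linear {v w : ℕ → ℝ} (hv : ∀ j, 0 ≤ v j)
    (hw : ∀ n, 0 ≤ w n) {T : ℝ} (hT : 0 < T) {c : ℝ}
    (hvw : ∀ t ∈ Set.Ioc 0 T,
      Tendsto (fun n : ℕ => w n * ∑ j ∈ Finset.Icc 0 ⌊t * n⌋₊, v j) atTop (nhds (c * t)))
    {f f' : ℝ → ℝ} (hf : ∀ t ∈ Set.Icc 0 T, HasDerivAt f (f' t) t)
    (hf' : ContinuousOn f' (Set.Icc 0 T)) :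
    Tendsto (fun n : ℕ => w n * ∑ j ∈ Finset.Icc 0 ⌊T * n⌋₊, v j * f (j / n)) atTop
      (nhds (c * ∫ t in (0 : ℝ)..T, f t)) := by
  have hintegrable : IntervalIntegrable f' volume 0 T :=
    (hf'.mono (Set.uIcc_of_le hT.le).subset).intervalIntegrable
  have hparts := intervalIntegral.integral_mul_deriv_eq_deriv_mul
    (by rwa [Set.uIcc_of_le hT.le]) (fun t _ => (hasDerivAt_id t).const_mul c) hintegrable (by simp)
  convert tendsto_mul_sum_floor_mul hv hw hT hvw hf hf' using 2
  rw [← intervalIntegral.integral_const_mul]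
  simpa [mul_comm] using hparts

lemma cast_le_mul_of_mem_Icc_floor {T : ℝ} (hT : 0 ≤ T) {n j : ℕ}
    (hj : j ∈ Finset.Icc 0 ⌊T * n⌋₊) : (j : ℝ) ≤ T * n :=
  (Nat.le_floor_iff (by positivity)).1 (Finset.mem_Icc.1 hj).2

theorem tendsto_mul_sum_ceil_of_floor {a : ℕ → ℕ → ℝ} (ha : ∀ n j, 0 ≤ a n j) {w : ℕ → ℝ}
    (hw : ∀ n, 0 ≤ w n) {F : ℝ → ℝ} {s T : ℝ} (hsT : s < T) (hs : 0 ≤ s)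
    (hF : ContinuousWithinAt F (Set.Iio T) T)
    (h : ∀ t ∈ Set.Ioc s T,
      Tendsto (fun n : ℕ => w n * ∑ j ∈ Finset.Icc 0 ⌊t * n⌋₊, a n j) atTop (nhds (F t))) :
    Tendsto (fun n : ℕ => w n * ∑ j ∈ Finset.range ⌈T * n⌉₊, a n j) atTop (nhds (F T)) := by
  rw [tendsto_order]
  constructor
  · intro b hb
    obtain ⟨t, htb, hst, htT⟩ := ((hF.eventually_const_lt hb).and (Ioo_mem_nhdsLT hsT)).exists
    filter_upwards [(h t ⟨hst, htT.le⟩).eventually_const_lt htb, eventually_gt_atTop 0]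
      with n hn hn0
    have hn0 : (0 : ℝ) < n := Nat.cast_pos.2 hn0
    refine hn.trans_le (mul_le_mul_of_nonneg_left ?_ (hw n))
    refine Finset.sum_le_sum_of_subset_of_nonneg (fun j hj => ?_) fun j _ _ => ha n j
    have hj : (j : ℝ) ≤ t * n := cast_le_mul_of_mem_Icc_floor (hs.trans hst.le) hj
    exact Finset.mem_range.2 (Nat.lt_ceil.2 (hj.trans_lt (mul_lt_mul_of_pos_right htT hn0)))
  · intro b hb
    filter_upwards [(h T ⟨hsT, le_rfl⟩).eventually_lt_const hb] with n hn
    refine lt_of_le_of_lt (mul_le_mul_of_nonneg_left ?_ (hw n)) hn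
    refine Finset.sum_le_sum_of_subset_of_nonneg (fun j hj => ?_) fun j _ _ => ha n j
    have hj : (j : ℝ) < T * n := Nat.lt_ceil.1 (Finset.mem_range.1 hj)
    exact Finset.mem_Icc.2 ⟨Nat.zero_le j, Nat.le_floor hj.le⟩

lemma integral_one_div_one_sub {T : ℝ} (hT : T < 1) :
    ∫ t in (0 : ℝ)..T, 1 / (1 - t) = -Real.log (1 - T) := by
  have h : (0 : ℝ) ∉ Set.uIcc (1 - T) 1 := Set.notMem_uIcc_of_lt (sub_pos.2 hT) one_pos
  rw [intervalIntegral.integral_comp_sub_left (fun x => 1 / x), sub_zero, integral_one_div h,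
    one_div, Real.log_inv]

section LevelProbabilities

variable {v : ℕ → ℝ} {a : ℕ → ℕ → ℝ}

lemma tendsto_log_mul_sum_floor_div_sub (hv : ∀ j, 0 ≤ v j)
    (hS : Tendsto (fun n : ℕ => Real.log n / n * ∑ j ∈ Finset.range n, v j) atTop (nhds 1))
    {T : ℝ} (hT : T ∈ Set.Ioo 0 1) :
    Tendsto (fun n : ℕ => Real.log n * ∑ j ∈ Finset.Icc 0 ⌊T * n⌋₊, v j / ((n : ℝ) - j)) atTop
      (nhds (-Real.log (1 - T))) := by
  have hsub : ∀ t ∈ Set.Icc 0 T, 1 - t ≠ 0 := fun t ht => (sub_pos.2 (ht.2.trans_lt hT.2)).ne'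
  have hderiv : ∀ t ∈ Set.Icc 0 T, HasDerivAt (fun t => 1 / (1 - t)) (1 / (1 - t) ^ 2) t := by
    intro t ht
    simpa [Pi.inv_def] using ((hasDerivAt_id t).const_sub 1).inv (hsub t ht)
  have hcont : ContinuousOn (fun t : ℝ => 1 / (1 - t) ^ 2) (Set.Icc 0 T) :=
    ContinuousOn.div (by fun_prop) (by fun_prop) fun t ht => pow_ne_zero 2 (hsub t ht)
  have habel := tendsto_mul_sum_floor_mul_of_linear hv
    (fun n => div_nonneg (Real.log_natCast_nonneg n) n.cast_nonneg) hT.1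
    (fun t ht => tendsto_log_div_mul_sum_floor hS ht.1) hderiv hcont
  rw [one_mul, integral_one_div_one_sub hT.2] at habel
  refine habel.congr' ?_
  filter_upwards [eventually_gt_atTop 0] with n hn
  have hn : (0 : ℝ) < n := Nat.cast_pos.2 hn
  rw [div_mul_eq_mul_div, mul_div_assoc, Finset.sum_div]
  congr 1
  refine Finset.sum_congr rfl fun j _ => ?_
  rw [one_sub_div hn.ne', one_div_div, mul_div_assoc', mul_div_right_comm,
    mul_div_cancel_right₀ _ hn.ne']

lemma inv_mul_div_sub_le {T x c : ℝ} (hT : T < 1) {n j : ℕ} (hn : 0 < n) (hj : (j : ℝ) ≤ T * n)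
    (hc : 0 ≤ c) (hx : c * (1 / (((n - j : ℕ) : ℝ) + 2)) ≤ x) :
    (1 + 2 / (1 - T) * (n : ℝ)⁻¹)⁻¹ * (c / ((n : ℝ) - j)) ≤ x := by
  have hn : (0 : ℝ) < n := Nat.cast_pos.2 hn
  have hT : 0 < 1 - T := sub_pos.2 hT
  have hgap : (1 - T) * n ≤ (n : ℝ) - j := by linarith
  have hgap0 : (0 : ℝ) < (n : ℝ) - j := (mul_pos hT hn).trans_le hgap
  rw [Nat.cast_sub (Nat.cast_le.1 (sub_pos.1 hgap0).le), mul_one_div] at hx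
  refine le_trans ?_ hx
  rw [inv_mul_eq_div, div_div]
  refine div_le_div_of_nonneg_left hc (by positivity) ?_
  have : 2 ≤ 2 / (1 - T) * (n : ℝ)⁻¹ * (n - j) := by
    rw [← div_eq_mul_inv, div_div, div_mul_eq_mul_div, le_div_iff₀ (by positivity)]
    gcongr
  linarith

lemma tendsto_log_mul_sum_floor (hv : ∀ j, 0 ≤ v j)
    (hlower : ∀ j m : ℕ, v j * (1 / ((m : ℝ) + 2)) ≤ a j m)
    (hupper : ∀ j m : ℕ, a j m ≤ v j * (1 / ((m : ℝ) + 1)))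
    (hS : Tendsto (fun n : ℕ => Real.log n / n * ∑ j ∈ Finset.range n, v j) atTop (nhds 1))
    {T : ℝ} (hT : T ∈ Set.Ioo 0 1) :
    Tendsto (fun n : ℕ => Real.log n * ∑ j ∈ Finset.Icc 0 ⌊T * n⌋₊, a j (n - j)) atTop
      (nhds (-Real.log (1 - T))) := by
  have hdiv := tendsto_log_mul_sum_floor_div_sub hv hS hT
  have hfactor : Tendsto (fun n : ℕ => (1 + 2 / (1 - T) * (n : ℝ)⁻¹)⁻¹) atTop (nhds 1) := by
    simpa using ((tendsto_inv_atTop_nhds_zero_nat.const_mul (2 / (1 - T))).const_add 1).inv₀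
      (by simp)
  have hlow := hfactor.mul hdiv
  rw [one_mul] at hlow
  refine tendsto_of_tendsto_of_tendsto_of_le_of_le' hlow hdiv ?_ ?_
  · filter_upwards [eventually_gt_atTop 0] with n hn
    rw [mul_left_comm, Finset.mul_sum]
    refine mul_le_mul_of_nonneg_left ?_ (Real.log_natCast_nonneg n)
    exact Finset.sum_le_sum fun j hj => inv_mul_div_sub_le hT.2 hn
      (cast_le_mul_of_mem_Icc_floor hT.1.le hj) (hv j) (hlower j _)
  · filter_upwards [eventually_gt_atTop 0] with n hn
    refine mul_le_mul_of_nonneg_left ?_ (Real.log_natCast_nonneg n)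
    refine Finset.sum_le_sum fun j hj => (hupper j _).trans ?_
    have hn : (0 : ℝ) < n := Nat.cast_pos.2 hn
    have hjn : (j : ℝ) < n := (cast_le_mul_of_mem_Icc_floor hT.1.le hj).trans_lt
      (mul_lt_of_lt_one_left hn hT.2)
    rw [Nat.cast_sub (Nat.cast_le.1 hjn.le), mul_one_div]
    exact div_le_div_of_nonneg_left (hv j) (sub_pos.2 hjn) (by linarith)

theorem tendsto_log_mul_sum_of_sum_eq_one (hv : ∀ j, 0 ≤ v j)
    (hlower : ∀ j m : ℕ, v j * (1 / ((m : ℝ) + 2)) ≤ a j m)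
    (hupper : ∀ j m : ℕ, a j m ≤ v j * (1 / ((m : ℝ) + 1)))
    (hsum : ∀ n, ∑ j ∈ Finset.range (n + 1), a j (n - j) = 1) {T : ℝ} (hT : T ∈ Set.Ioo 0 1) :
    Tendsto (fun n : ℕ => Real.log n * ∑ j ∈ Finset.range ⌈T * n⌉₊, a j (n - j)) atTop
      (nhds (-Real.log (1 - T))) := by
  have hS := tendsto_log_div_mul_sum_of_renewal hv
    (fun n => (Finset.sum_le_sum fun j _ => hlower j (n - j)).trans_eq (hsum n))
    (fun n => (hsum n).symm.trans_le (Finset.sum_le_sum fun j _ => hupper j (n - j)))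
  have ha : ∀ n j, 0 ≤ a j (n - j) := fun n j =>
    (mul_nonneg (hv j) (by positivity)).trans (hlower j (n - j))
  refine tendsto_mul_sum_ceil_of_floor ha (fun n => Real.log_natCast_nonneg n) hT.1 le_rfl
    (F := fun t => -Real.log (1 - t)) ?_ fun t ht =>
      tendsto_log_mul_sum_floor hv hlower hupper hS ⟨ht.1, ht.2.trans_lt hT.2⟩
  have hcont : ContinuousAt (fun t => -Real.log (1 - t)) T :=
    (ContinuousAt.log (by fun_prop) (sub_pos.2 hT.2).ne').neg
  exact hcont.continuousWithinAt

end LevelProbabilities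

section Digits

/-- The irrational numbers of the open unit interval: the points whose continued fraction
expansion does not terminate. -/
def unitIrrationals : Set ℝ := {x | x ∈ Set.Ioo 0 1 ∧ Irrational x}

/-- The first continued fraction digit `a_1(x)`. -/
noncomputable def firstDigit (x : ℝ) : ℕ := ⌊1 / x⌋₊

variable {x : ℝ} {n k m : ℕ}

lemma gaussMap_mem_unitIrrationals (hx : x ∈ unitIrrationals) : gaussMap x ∈ unitIrrationals := by
  have hirr : Irrational (Int.fract (1 / x)) := by
    simpa only [Int.fract, one_div] using hx.2.inv.sub_intCast _
  rw [gaussMap, if_neg hx.1.1.ne']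
  exact ⟨⟨(Int.fract_nonneg _).lt_of_ne hirr.ne_zero.symm, Int.fract_lt_one _⟩, hirr⟩

lemma iterate_gaussMap_mem_unitIrrationals (hx : x ∈ unitIrrationals) (k : ℕ) :
    gaussMap^[k] x ∈ unitIrrationals :=
  Set.MapsTo.iterate (fun _ => gaussMap_mem_unitIrrationals) k hx

lemma one_div_eq_firstDigit_add_gaussMap (hx : x ∈ unitIrrationals) :
    1 / x = firstDigit x + gaussMap x := by
  have := hx.1.1
  rw [firstDigit, natCast_floor_eq_intCast_floor (by positivity), gaussMap, if_neg this.ne',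
    Int.floor_add_fract]

lemma lt_firstDigit_iff (hx : x ∈ unitIrrationals) :
    m < firstDigit x ↔ x ∈ Set.Ioo 0 (1 / ((m : ℝ) + 1)) := by
  have hne : x ≠ 1 / ((m : ℝ) + 1) := by
    simpa using hx.2.ne_rat (1 / ((m : ℚ) + 1))
  rw [Set.mem_Ioo, and_iff_right hx.1.1, ← Nat.succ_le_iff, firstDigit,
    Nat.le_floor_iff (one_div_nonneg.2 hx.1.1.le), le_one_div (by positivity) hx.1.1,
    Nat.cast_succ]
  exact ⟨fun h => h.lt_of_ne hne, le_of_lt⟩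

lemma firstDigit_pos (hx : x ∈ unitIrrationals) : 0 < firstDigit x :=
  (lt_firstDigit_iff hx).2 (by simpa using hx.1)

lemma cfDigitSum_zero (x : ℝ) : cfDigitSum x 0 = 0 := rfl

lemma cfDigitSum_succ (x : ℝ) (k : ℕ) :
    cfDigitSum x (k + 1) = cfDigitSum x k + firstDigit (gaussMap^[k] x) :=
  Finset.sum_range_succ ..

lemma strictMono_cfDigitSum (hx : x ∈ unitIrrationals) : StrictMono (cfDigitSum x) :=
  strictMono_nat_of_lt_succ fun k => by
    rw [cfDigitSum_succ]
    exact Nat.lt_add_of_pos_right (firstDigit_pos (iterate_gaussMap_mem_unitIrrationals hx k))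

lemma Xproc_le (n : ℕ) (x : ℝ) : Xproc n x ≤ n :=
  csSup_le ⟨0, Nat.zero_le n, 0, cfDigitSum_zero x⟩ fun _ hm => hm.1

lemma cfDigitSum_le_Xproc (hk : cfDigitSum x k ≤ n) : cfDigitSum x k ≤ Xproc n x :=
  le_csSup ⟨n, fun _ hm => hm.1⟩ ⟨hk, k, rfl⟩

lemma exists_cfDigitSum_eq_Xproc (n : ℕ) (x : ℝ) : ∃ k, cfDigitSum x k = Xproc n x :=
  (Nat.sSup_mem (s := {m | m ≤ n ∧ ∃ k, cfDigitSum x k = m})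
    ⟨0, Nat.zero_le n, 0, cfDigitSum_zero x⟩ ⟨n, fun _ hm => hm.1⟩).2

lemma Xproc_eq_cfDigitSum_iff (hx : x ∈ unitIrrationals) (hk : cfDigitSum x k ≤ n) :
    Xproc n x = cfDigitSum x k ↔ n < cfDigitSum x (k + 1) := by
  have hmono := strictMono_cfDigitSum hx
  constructor
  · intro h
    by_contra! hle
    exact (hmono k.lt_succ_self).not_ge ((cfDigitSum_le_Xproc hle).trans_eq h)
  · intro h
    obtain ⟨l, hl⟩ := exists_cfDigitSum_eq_Xproc n x
    have hlk : l < k + 1 := hmono.lt_iff_lt.1 ((hl.trans_le (Xproc_le n x)).trans_lt h)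
    exact (hl.symm.trans_le (hmono.monotone (Nat.lt_succ_iff.1 hlk))).antisymm
      (cfDigitSum_le_Xproc hk)

lemma measurableSet_unitIrrationals : MeasurableSet unitIrrationals :=
  measurableSet_Ioo.diff (Set.countable_range ((↑) : ℚ → ℝ)).measurableSet

lemma unitIrrationals_ae_eq_Ioo : unitIrrationals =ᵐ[volume] Set.Ioo (0 : ℝ) 1 :=
  sdiff_null_ae_eq_self ((Set.countable_range ((↑) : ℚ → ℝ)).measure_zero volume)

lemma measurable_gaussMap : Measurable gaussMap :=
  Measurable.ite (measurableSet_singleton 0) measurable_const (by fun_prop)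

lemma measurable_cfDigitSum (k : ℕ) : Measurable fun x => cfDigitSum x k := by
  refine Finset.measurable_sum _ fun i _ => ?_
  exact Nat.measurable_floor.comp ((measurable_gaussMap.iterate i).const_div 1)

end Digits

section Visits

/-- The event that `j` is one of the digit sums of `x` and that the tail of the expansion after it,
the corresponding iterate of the Gauss map, lies in `B`. -/
def digitSumVisit (j : ℕ) (B : Set ℝ) : Set ℝ :=
  {x ∈ unitIrrationals | ∃ k, cfDigitSum x k = j ∧ gaussMap^[k] x ∈ B}

variable {x : ℝ} {B C : Set ℝ} {n j : ℕ}

lemma measurableSet_digitSumVisit (j : ℕ) (hB : MeasurableSet B) :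
    MeasurableSet (digitSumVisit j B) := by
  have : digitSumVisit j B =
      unitIrrationals ∩ ⋃ k, {x | cfDigitSum x k = j} ∩ gaussMap^[k] ⁻¹' B := by
    ext x
    simp [digitSumVisit]
  rw [this]
  exact measurableSet_unitIrrationals.inter <| MeasurableSet.iUnion fun k =>
    (measurable_cfDigitSum k (measurableSet_singleton j)).inter (measurable_gaussMap.iterate k hB)

lemma digitSumVisit_congr (h : ∀ y ∈ unitIrrationals, y ∈ B ↔ y ∈ C) :
    digitSumVisit j B = digitSumVisit j C := by
  ext x
  refine and_congr_right fun hx => exists_congr fun k => and_congr_right fun _ => ?_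
  exact h _ (iterate_gaussMap_mem_unitIrrationals hx k)

lemma digitSumVisit_zero (B : Set ℝ) : digitSumVisit 0 B = unitIrrationals ∩ B := by
  ext x
  refine and_congr_right fun hx => ⟨?_, fun hxB => ⟨0, cfDigitSum_zero x, hxB⟩⟩
  rintro ⟨k, hk, hxB⟩
  obtain rfl : k = 0 := (strictMono_cfDigitSum hx).injective hk
  exact hxB

lemma mem_digitSumVisit_firstDigit_iff {i : ℕ} (hi : i ≤ n) :
    x ∈ digitSumVisit i {y | firstDigit y = n - i ∧ gaussMap y ∈ B} ↔ x ∈ unitIrrationals ∧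
      ∃ k, cfDigitSum x k = i ∧ cfDigitSum x (k + 1) = n ∧ gaussMap^[k + 1] x ∈ B := by
  refine and_congr_right fun _ => exists_congr fun k => and_congr_right fun hk => ?_
  rw [Set.mem_ofPred_eq, cfDigitSum_succ, hk, Function.iterate_succ_apply']
  exact and_congr_left fun _ => by omega

lemma digitSumVisit_succ (n : ℕ) (B : Set ℝ) :
    digitSumVisit (n + 1) B = ⋃ i : Fin (n + 1),
      digitSumVisit i {y | firstDigit y = n + 1 - i ∧ gaussMap y ∈ B} := by
  ext x
  simp only [Set.mem_iUnion, mem_digitSumVisit_firstDigit_iff (Fin.is_lt _).le]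
  constructor
  · rintro ⟨hx, k, hk, hxB⟩
    obtain _ | k := k
    · simp [cfDigitSum_zero] at hk
    · have hlt := strictMono_cfDigitSum hx k.lt_succ_self
      exact ⟨⟨cfDigitSum x k, hlt.trans_eq hk⟩, hx, k, rfl, hk, hxB⟩
  · rintro ⟨i, hx, k, -, hk, hxB⟩
    exact ⟨hx, k + 1, hk, hxB⟩

lemma pairwise_disjoint_digitSumVisit_firstDigit (n : ℕ) (B : Set ℝ) :
    Pairwise (Function.onFun Disjoint fun i : Fin (n + 1) =>
      digitSumVisit i {y | firstDigit y = n + 1 - i ∧ gaussMap y ∈ B}) := by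
  refine fun i j hij => Set.disjoint_left.2 fun x hi hj => hij (Fin.ext ?_)
  obtain ⟨hx, k, hki, hk, -⟩ := (mem_digitSumVisit_firstDigit_iff i.is_lt.le).1 hi
  obtain ⟨-, l, hlj, hl, -⟩ := (mem_digitSumVisit_firstDigit_iff j.is_lt.le).1 hj
  obtain rfl : k = l := Nat.succ_injective <|
    (strictMono_cfDigitSum hx).injective (hk.trans hl.symm)
  exact hki.symm.trans hlj

lemma Xproc_eq_iff_mem_digitSumVisit (hx : x ∈ unitIrrationals) (hj : j ≤ n) :
    Xproc n x = j ↔ x ∈ digitSumVisit j (Set.Ioo 0 (1 / (((n - j : ℕ) : ℝ) + 1))) := by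
  have hiff : ∀ k, cfDigitSum x k = j → (Xproc n x = j ↔
      gaussMap^[k] x ∈ Set.Ioo 0 (1 / (((n - j : ℕ) : ℝ) + 1))) := by
    rintro k rfl
    rw [Xproc_eq_cfDigitSum_iff hx hj, cfDigitSum_succ,
      ← lt_firstDigit_iff (iterate_gaussMap_mem_unitIrrationals hx k)]
    omega
  constructor
  · intro h
    obtain ⟨k, hk⟩ := exists_cfDigitSum_eq_Xproc n x
    exact ⟨hx, k, hk.trans h, (hiff k (hk.trans h)).1 h⟩
  · rintro ⟨-, k, hk, hB⟩
    exact (hiff k hk).2 hB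

end Visits

section InverseBranch

/-- The inverse branch `y ↦ 1 / (a + y)` of the Gauss map over the points with first digit `a`. -/
noncomputable def inverseBranch (a : ℕ) (y : ℝ) : ℝ := 1 / (a + y)

variable {a : ℕ} {s s' t t' y : ℝ}

lemma inverseBranch_nonneg (a : ℕ) (hs : 0 ≤ s) : 0 ≤ inverseBranch a s :=
  one_div_nonneg.2 (by positivity)

lemma inverseBranch_le_one (ha : 0 < a) (hs : 0 ≤ s) : inverseBranch a s ≤ 1 := by
  have : (1 : ℝ) ≤ a := Nat.one_le_cast.2 ha
  exact div_le_one_of_le₀ (by linarith) (by positivity)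

lemma inverseBranch_le_inverseBranch (ha : 0 < a) (hs : 0 ≤ s) (hst : s ≤ t) :
    inverseBranch a t ≤ inverseBranch a s :=
  one_div_le_one_div_of_le (by positivity) (by linarith)

lemma inverseBranch_sub_inverseBranch (ha : 0 < a) (hs : 0 ≤ s) (ht : 0 ≤ t) :
    inverseBranch a s - inverseBranch a t = (t - s) * (inverseBranch a t * inverseBranch a s) := by
  simp only [inverseBranch]
  field_simp
  ring

lemma inverseBranch_succ_mul_one_add (ha : 0 < a) (hs : 0 ≤ s) :
    inverseBranch (a + 1) s * (1 + inverseBranch a s) = inverseBranch a s := by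
  simp only [inverseBranch, Nat.cast_succ]
  field_simp
  ring

lemma one_add_mul_inverseBranch_le (ha : 0 < a) (hs : 0 ≤ s) (hst : s ≤ t) :
    (1 + s) * inverseBranch a s ≤ (1 + t) * inverseBranch a t := by
  have ha : (1 : ℝ) ≤ a := Nat.one_le_cast.2 ha
  have ht : 0 ≤ t := hs.trans hst
  rw [inverseBranch, inverseBranch, mul_one_div, mul_one_div,
    div_le_div_iff₀ (by positivity) (by positivity)]
  nlinarith

lemma inverseBranch_mul_inverseBranch_mul_le {x x' : ℝ} (ha : 0 < a) (hs : 0 ≤ s) (hss' : s ≤ s')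
    (ht : 0 ≤ t) (htt' : t ≤ t') (hx : 0 ≤ x)
    (h : (1 + inverseBranch a s') * (1 + inverseBranch a t') * x' ≤
      (1 + inverseBranch a s) * (1 + inverseBranch a t) * x) :
    inverseBranch a s' * inverseBranch a t' * x' ≤ inverseBranch a s * inverseBranch a t * x := by
  have hfactor : ∀ {r u : ℝ}, 0 ≤ r → 0 ≤ u → ∀ z, inverseBranch a r * inverseBranch a u * z =
      inverseBranch (a + 1) r * inverseBranch (a + 1) u *
        ((1 + inverseBranch a r) * (1 + inverseBranch a u) * z) := by
    intro r u hr hu z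
    rw [← mul_assoc (inverseBranch (a + 1) r * _), mul_mul_mul_comm,
      inverseBranch_succ_mul_one_add ha hr, inverseBranch_succ_mul_one_add ha hu]
  have hs' := hs.trans hss'
  have ht' := ht.trans htt'
  have hb := inverseBranch_nonneg a hs
  have hc := inverseBranch_nonneg a ht
  have hb' := inverseBranch_nonneg (a + 1) hs
  have hc' := inverseBranch_nonneg (a + 1) ht'
  have hb'' := inverseBranch_nonneg (a + 1) hs'
  rw [hfactor hs' ht', hfactor hs ht]
  refine mul_le_mul_of_nonneg (mul_le_mul ?_ ?_ hc' hb') h (by positivity) (by positivity)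
  · exact inverseBranch_le_inverseBranch a.succ_pos hs hss'
  · exact inverseBranch_le_inverseBranch a.succ_pos ht htt'

lemma one_add_mul_inverseBranch_mul_inverseBranch_mul_le {x x' : ℝ} (ha : 0 < a) (hs : 0 ≤ s)
    (hss' : s ≤ s') (ht : 0 ≤ t) (htt' : t ≤ t') (hx' : 0 ≤ x') (h : x ≤ x') :
    (1 + s) * (1 + t) * (inverseBranch a s * inverseBranch a t * x) ≤
      (1 + s') * (1 + t') * (inverseBranch a s' * inverseBranch a t' * x') := by
  have ht' := ht.trans htt'
  have hb := inverseBranch_nonneg a hs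
  have hc := inverseBranch_nonneg a ht
  have hc' := inverseBranch_nonneg a ht'
  rw [← mul_assoc ((1 + s) * _), ← mul_assoc ((1 + s') * _), mul_mul_mul_comm (1 + s),
    mul_mul_mul_comm (1 + s')]
  refine mul_le_mul_of_nonneg (mul_le_mul_of_nonneg ?_ ?_ ?_ ?_) h ?_ hx'
  · exact one_add_mul_inverseBranch_le ha hs hss'
  · exact one_add_mul_inverseBranch_le ha ht htt'
  all_goals positivity

lemma mem_Ioo_inverseBranch_iff (ha : 0 < a) (hs : 0 ≤ s) (ht : 0 ≤ t) (ht1 : t ≤ 1)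
    (hy : y ∈ unitIrrationals) :
    y ∈ Set.Ioo (inverseBranch a t) (inverseBranch a s) ↔
      firstDigit y = a ∧ gaussMap y ∈ Set.Ioo s t := by
  have hy0 := hy.1.1
  have hmem : y ∈ Set.Ioo (inverseBranch a t) (inverseBranch a s) ↔
      1 / y ∈ Set.Ioo (a + s) (a + t) := by
    rw [Set.mem_Ioo, inverseBranch, inverseBranch, one_div_lt (by positivity) hy0,
      lt_one_div hy0 (by positivity), and_comm, Set.mem_Ioo]
  rw [hmem]
  constructor
  · intro h
    have hdigit : firstDigit y = a :=
      (Nat.floor_eq_iff (by positivity)).2 ⟨by linarith [h.1], by linarith [h.2]⟩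
    rw [one_div_eq_firstDigit_add_gaussMap hy, hdigit] at h
    exact ⟨hdigit, by simpa using h⟩
  · rintro ⟨rfl, h⟩
    rw [one_div_eq_firstDigit_add_gaussMap hy]
    simpa using h

end InverseBranch

section VisitDensity

/-- The mean density on the interval `(s, t)` of the tails at visits of the digit sums to `n`: see
`volume_real_digitSumVisit_Ioo`. It equals `∑ 1 / ((q + s * q') * (q + t * q'))` over the digit
words of sum `n`, where `q` and `q'` are the last two denominators; the recursion splits off the
last digit of the word. -/
noncomputable def visitDensity : ℕ → ℝ → ℝ → ℝ
  | 0, _, _ => 1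
  | n + 1, s, t => ∑ i : Fin (n + 1),
      inverseBranch (n + 1 - i) t * inverseBranch (n + 1 - i) s *
        visitDensity i (inverseBranch (n + 1 - i) t) (inverseBranch (n + 1 - i) s)
  termination_by n => n

variable {s s' t t' : ℝ}

lemma visitDensity_zero (s t : ℝ) : visitDensity 0 s t = 1 := by
  rw [visitDensity]

lemma visitDensity_succ (n : ℕ) (s t : ℝ) :
    visitDensity (n + 1) s t = ∑ i : Fin (n + 1),
      inverseBranch (n + 1 - i) t * inverseBranch (n + 1 - i) s *
        visitDensity i (inverseBranch (n + 1 - i) t) (inverseBranch (n + 1 - i) s) := by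
  rw [visitDensity]

lemma visitDensity_nonneg (n : ℕ) (hs : 0 ≤ s) (ht : 0 ≤ t) : 0 ≤ visitDensity n s t := by
  induction n using Nat.strong_induction_on generalizing s t with
  | _ n ih =>
    obtain _ | n := n
    · exact (visitDensity_zero s t).ge.trans' zero_le_one
    · rw [visitDensity_succ]
      refine Finset.sum_nonneg fun i _ => mul_nonneg (mul_nonneg ?_ ?_) (ih i i.is_lt ?_ ?_)
      all_goals exact inverseBranch_nonneg _ ‹_›

-- The two monotonicities have to be proved together, since inverse branches reverse the order.
lemma visitDensity_le_and_one_add_mul_visitDensity_le (n : ℕ) (hs : 0 ≤ s) (hss' : s ≤ s')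
    (ht : 0 ≤ t) (htt' : t ≤ t') :
    visitDensity n s' t' ≤ visitDensity n s t ∧
      (1 + s) * (1 + t) * visitDensity n s t ≤ (1 + s') * (1 + t') * visitDensity n s' t' := by
  induction n using Nat.strong_induction_on generalizing s s' t t' with
  | _ n ih =>
    obtain _ | n := n
    · have := hs.trans hss'
      simp only [visitDensity_zero, mul_one]
      exact ⟨le_rfl, by gcongr⟩
    have ha : ∀ i : Fin (n + 1), 0 < n + 1 - (i : ℕ) := fun i => Nat.sub_pos_of_lt i.is_lt
    have hb : ∀ {r : ℝ}, 0 ≤ r → ∀ i : Fin (n + 1), 0 ≤ inverseBranch (n + 1 - i) r :=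
      fun hr i => inverseBranch_nonneg _ hr
    have ih' := fun i : Fin (n + 1) => ih i i.is_lt
      (hb (ht.trans htt') i) (inverseBranch_le_inverseBranch (ha i) ht htt')
      (hb (hs.trans hss') i) (inverseBranch_le_inverseBranch (ha i) hs hss')
    simp only [visitDensity_succ, Finset.mul_sum]
    constructor <;> refine Finset.sum_le_sum fun i _ => ?_
    · exact inverseBranch_mul_inverseBranch_mul_le (ha i) ht htt' hs hss'
        (visitDensity_nonneg _ (hb ht i) (hb hs i)) (ih' i).2
    · rw [mul_comm (1 + s), mul_comm (1 + s')]
      exact one_add_mul_inverseBranch_mul_inverseBranch_mul_le (ha i) ht htt' hs hss'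
        (visitDensity_nonneg _ (hb (ht.trans htt') i) (hb (hs.trans hss') i)) (ih' i).1

lemma digitSumVisit_firstDigit_eq {a : ℕ} (ha : 0 < a) (hs : 0 ≤ s) (ht : 0 ≤ t) (ht1 : t ≤ 1)
    (i : ℕ) : digitSumVisit i {y | firstDigit y = a ∧ gaussMap y ∈ Set.Ioo s t} =
      digitSumVisit i (Set.Ioo (inverseBranch a t) (inverseBranch a s)) :=
  digitSumVisit_congr fun _ hy => (mem_Ioo_inverseBranch_iff ha hs ht ht1 hy).symm

lemma volume_real_unitIrrationals_inter_Ioo (hs : 0 ≤ s) (hst : s ≤ t) (ht : t ≤ 1) :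
    volume.real (unitIrrationals ∩ Set.Ioo s t) = t - s := by
  have hae : (unitIrrationals ∩ Set.Ioo s t : Set ℝ) =ᵐ[volume]
      (Set.Ioo 0 1 ∩ Set.Ioo s t : Set ℝ) :=
    unitIrrationals_ae_eq_Ioo.inter (ae_eq_refl _)
  rw [measureReal_congr hae, Set.inter_eq_right.2 (Set.Ioo_subset_Ioo hs ht),
    Real.volume_real_Ioo_of_le hst]

lemma volume_digitSumVisit_ne_top (j : ℕ) (B : Set ℝ) : volume (digitSumVisit j B) ≠ ⊤ :=
  measure_ne_top_of_subset (fun _ hx => hx.1.1 : digitSumVisit j B ⊆ Set.Ioo 0 1) (by simp)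

theorem volume_real_digitSumVisit_Ioo (n : ℕ) (hs : 0 ≤ s) (hst : s ≤ t) (ht : t ≤ 1) :
    volume.real (digitSumVisit n (Set.Ioo s t)) = (t - s) * visitDensity n s t := by
  induction n using Nat.strong_induction_on generalizing s t with
  | _ n ih =>
    have ht0 := hs.trans hst
    obtain _ | n := n
    · rw [digitSumVisit_zero, visitDensity_zero, mul_one,
        volume_real_unitIrrationals_inter_Ioo hs hst ht]
    have ha : ∀ i : Fin (n + 1), 0 < n + 1 - (i : ℕ) := fun i => Nat.sub_pos_of_lt i.is_lt
    have hdisj := pairwise_disjoint_digitSumVisit_firstDigit n (Set.Ioo s t)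
    simp only [digitSumVisit_succ, digitSumVisit_firstDigit_eq (ha _) hs ht0 ht] at hdisj ⊢
    rw [measureReal_iUnion_fintype hdisj (fun i => measurableSet_digitSumVisit _ measurableSet_Ioo)
        fun i => volume_digitSumVisit_ne_top _ _,
      visitDensity_succ, Finset.mul_sum]
    refine Finset.sum_congr rfl fun i _ => ?_
    rw [ih i i.is_lt (inverseBranch_nonneg _ ht0) (inverseBranch_le_inverseBranch (ha i) hs hst)
      (inverseBranch_le_one (ha i) hs), inverseBranch_sub_inverseBranch (ha i) hs ht0, mul_assoc]

end VisitDensity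

section GapProbability

/-- The probability that `j` is a digit sum and that the next digit exceeds `m`, that is, the
probability of the event `X_{j+m} = j`. -/
noncomputable def gapProbability (j m : ℕ) : ℝ :=
  volume.real (digitSumVisit j (Set.Ioo 0 (1 / ((m : ℝ) + 1))))

variable {n N : ℕ} {ε : ℝ}

lemma gapProbability_eq (j m : ℕ) :
    gapProbability j m = 1 / ((m : ℝ) + 1) * visitDensity j 0 (1 / (m + 1)) := by
  have hle : 1 / ((m : ℝ) + 1) ≤ 1 := div_le_one_of_le₀ (by simp) (by positivity)
  rw [gapProbability, volume_real_digitSumVisit_Ioo j le_rfl (by positivity) hle, sub_zero]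

lemma gapProbability_le (j m : ℕ) :
    gapProbability j m ≤ visitDensity j 0 0 * (1 / ((m : ℝ) + 1)) := by
  rw [gapProbability_eq, mul_comm]
  gcongr
  exact (visitDensity_le_and_one_add_mul_visitDensity_le j le_rfl le_rfl le_rfl (by positivity)).1

lemma le_gapProbability (j m : ℕ) :
    visitDensity j 0 0 * (1 / ((m : ℝ) + 2)) ≤ gapProbability j m := by
  have hmono := (visitDensity_le_and_one_add_mul_visitDensity_le j le_rfl le_rfl le_rfl
    (show 0 ≤ 1 / ((m : ℝ) + 1) by positivity)).2
  calc visitDensity j 0 0 * (1 / ((m : ℝ) + 2))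
    _ = (1 + 0) * (1 + 0) * visitDensity j 0 0 * (1 / ((m : ℝ) + 2)) := by ring
    _ ≤ (1 + 0) * (1 + 1 / ((m : ℝ) + 1)) * visitDensity j 0 (1 / (m + 1)) *
          (1 / ((m : ℝ) + 2)) := by gcongr
    _ = gapProbability j m := by
        rw [gapProbability_eq]
        field_simp
        ring

lemma setOf_Xproc_lt_ae_eq (hN : N ≤ n + 1) :
    {x ∈ Set.Icc (0 : ℝ) 1 | Xproc n x < N} =ᵐ[volume]
      ⋃ j ∈ Finset.range N, digitSumVisit j (Set.Ioo 0 (1 / (((n - j : ℕ) : ℝ) + 1))) := by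
  have hae : Set.Icc (0 : ℝ) 1 =ᵐ[volume] unitIrrationals :=
    Ioo_ae_eq_Icc.symm.trans unitIrrationals_ae_eq_Ioo.symm
  have heq : unitIrrationals ∩ {x | Xproc n x < N} =
      ⋃ j ∈ Finset.range N, digitSumVisit j (Set.Ioo 0 (1 / (((n - j : ℕ) : ℝ) + 1))) := by
    ext x
    simp only [Set.mem_iUnion, exists_prop, Finset.mem_range]
    constructor
    · rintro ⟨hx, hlt⟩
      exact ⟨_, hlt, (Xproc_eq_iff_mem_digitSumVisit hx (Xproc_le n x)).1 rfl⟩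
    · rintro ⟨j, hj, hxj⟩
      have hX := (Xproc_eq_iff_mem_digitSumVisit hxj.1 (by omega)).2 hxj
      exact ⟨hxj.1, hX.trans_lt hj⟩
  rw [← heq]
  exact hae.inter (ae_eq_refl {x | Xproc n x < N})

lemma volume_real_setOf_Xproc_lt (hN : N ≤ n + 1) :
    volume.real {x ∈ Set.Icc (0 : ℝ) 1 | Xproc n x < N} =
      ∑ j ∈ Finset.range N, gapProbability j (n - j) := by
  rw [measureReal_congr (setOf_Xproc_lt_ae_eq hN), measureReal_biUnion_finset
    ?_ (fun j _ => measurableSet_digitSumVisit j measurableSet_Ioo)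
    fun j _ => volume_digitSumVisit_ne_top j _]
  · rfl
  · refine fun i hi j hj hij => Set.disjoint_left.2 fun x hxi hxj => hij ?_
    simp only [Finset.coe_range, Set.mem_Iio] at hi hj
    rw [← (Xproc_eq_iff_mem_digitSumVisit hxi.1 (by omega)).2 hxi]
    exact (Xproc_eq_iff_mem_digitSumVisit hxj.1 (by omega)).2 hxj

lemma sum_gapProbability (n : ℕ) :
    ∑ j ∈ Finset.range (n + 1), gapProbability j (n - j) = 1 := by
  rw [← volume_real_setOf_Xproc_lt le_rfl, Set.sep_eq_self_iff_mem_true.2 fun x _ =>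
    Nat.lt_succ_of_le (Xproc_le n x)]
  simp

lemma lt_sub_Xproc_div_iff (hn : 0 < n) (x : ℝ) :
    ε < ((n : ℝ) - Xproc n x) / n ↔ Xproc n x < ⌈(1 - ε) * n⌉₊ := by
  rw [Nat.lt_ceil, lt_div_iff₀ (Nat.cast_pos.2 hn)]
  constructor <;> intro h <;> linarith

lemma volume_real_setOf_lt_sub_Xproc_div (hε : 0 ≤ ε) (hn : 0 < n) :
    volume.real {x ∈ Set.Icc (0 : ℝ) 1 | ε < ((n : ℝ) - Xproc n x) / n} =
      ∑ j ∈ Finset.range ⌈(1 - ε) * n⌉₊, gapProbability j (n - j) := by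
  have hceil : ⌈(1 - ε) * n⌉₊ ≤ n + 1 :=
    Nat.ceil_le.2 (by push_cast; nlinarith [n.cast_nonneg (α := ℝ)])
  simp only [lt_sub_Xproc_div_iff hn, volume_real_setOf_Xproc_lt hceil]

end GapProbability

/-- Large deviation law: for every `ε ∈ (0,1)`,
`λ({x : (n - Xₙ(x))/n > ε}) ∼ (-log ε)/log n` as `n → ∞`. -/
theorem large_deviation_law_for_digit_sums (ε : ℝ) (hε : ε ∈ Set.Ioo (0 : ℝ) 1) :
    Tendsto (fun n : ℕ =>
        (volume {x ∈ Set.Icc (0 : ℝ) 1 |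
          ε < ((n : ℝ) - (Xproc n x : ℝ)) / n}).toReal /
          ((-Real.log ε) / Real.log n))
      atTop (nhds 1) := by
  have hlog : -Real.log ε ≠ 0 := (neg_pos.2 (Real.log_neg hε.1 hε.2)).ne'
  have hlim := tendsto_log_mul_sum_of_sum_eq_one
    (fun j => visitDensity_nonneg j le_rfl le_rfl) le_gapProbability gapProbability_le
    sum_gapProbability (T := 1 - ε) ⟨by linarith [hε.2], by linarith [hε.1]⟩
  rw [sub_sub_cancel] at hlim
  have hquot := hlim.div_const (-Real.log ε)
  rw [div_self hlog] at hquot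
  refine hquot.congr' ?_
  filter_upwards [eventually_gt_atTop 0] with n hn
  rw [← volume_real_setOf_lt_sub_Xproc_div hε.1.le hn, div_div_eq_mul_div, mul_comm]
  rfl
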